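/- Let M be a cancellative commutative monoid that is not a group. Suppose N is a submonoid of M for which there exist b ∈ N and ℓ ∈ ℕ such that Z_{N,ℓ}(b) is infinite. Then M has an undermonoid W containing N such that Z_W(b) is infinite; in particular W is not an FFM. -/

import Mathlib

/-- The set of factorizations of `b` in the submonoid `S`. -/
def ZSet {M : Type*} [CancelCommMonoid M] (S : Submonoid M) (b : S) :
    Set (Multiset (Associates S)) :=
  {z | (∀ a ∈ z, Irreducible a) ∧ z.prod = Associates.mk b}

/-- The set of length-`ℓ` factorizations of `b` in `S`. -/
def ZSetLen {M : Type*} [CancelCommMonoid M] (S : Submonoid M) (b : S) (ℓ : ℕ) :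
    Set (Multiset (Associates S)) :=
  {z ∈ ZSet S b | Multiset.card z = ℓ}

/-- `S` is an FFM. -/
def IsFFM {M : Type*} [CancelCommMonoid M] (S : Submonoid M) : Prop :=
  ∀ b : S, (ZSet S b).Nonempty ∧ (ZSet S b).Finite

/-- A submonoid `N` of `M` is an undermonoid if every `m ∈ M` satisfies
`m * x = y` for some `x, y ∈ N`. -/
def IsUndermonoid {M : Type*} [CancelCommMonoid M] (N : Submonoid M) : Prop :=
  ∀ m : M, ∃ x ∈ N, ∃ y ∈ N, m * x = y

/-!
For a nonunit `x`, adjoin to `N` all the multiples in `M` of `b * x`. The result `W` is an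
undermonoid because it contains a nonempty ideal of `M`, while the divisors of `b` in `W` all lie
in `N`, since no multiple of `b * x` divides `b`. As units divide everything, `N` and `W` have the
same units, and so distinct factorizations of `b` in `N` stay distinct factorizations in `W`.
-/

section Associates

variable {A B : Type*} [CommMonoid A] [CommMonoid B] {f : A →* B} {a b : A}

/-- The homomorphism between the reduced monoids of `A` and `B` induced by `f : A →* B`. -/
def associatesMap (f : A →* B) : Associates A →* Associates B where
  toFun := Quotient.map f fun _ _ h => h.map f
  map_one' := congrArg Associates.mk (map_one f)
  map_mul' := by
    rintro ⟨x⟩ ⟨y⟩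
    exact congrArg Associates.mk (map_mul f x y)

theorem associatesMap_mk (f : A →* B) (a : A) :
    associatesMap f (Associates.mk a) = Associates.mk (f a) :=
  rfl

/-- `f` identifies `A` with a submonoid of `B` that contains every divisor of `f b`. This is the
notion of a divisor-closed submonoid, localized at the single element `b`. -/
structure IsDivisorClosedAt (f : A →* B) (b : A) : Prop where
  injective : Function.Injective f
  mem_range_of_dvd : ∀ y, y ∣ f b → y ∈ Set.range f

namespace IsDivisorClosedAt

theorem isLocalHom (hf : IsDivisorClosedAt f b) : IsLocalHom f where
  map_nonunit a ha := by
    obtain ⟨v, hv⟩ := ha.exists_right_inv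
    obtain ⟨a', rfl⟩ := hf.mem_range_of_dvd v (IsUnit.of_mul_eq_one_right _ hv).dvd
    refine IsUnit.of_mul_eq_one a' (hf.injective ?_)
    rw [map_mul, hv, map_one]

theorem associated_of_map (hf : IsDivisorClosedAt f b) {x y : A}
    (hxy : Associated (f x) (f y)) : Associated x y := by
  have := hf.isLocalHom
  obtain ⟨u, hu⟩ := hxy
  obtain ⟨v, hv⟩ := hf.mem_range_of_dvd u u.isUnit.dvd
  have hv_unit : IsUnit v := isUnit_of_map_unit f v (hv ▸ u.isUnit)
  refine ⟨hv_unit.unit, hf.injective ?_⟩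
  rw [IsUnit.unit_spec, map_mul, hv, hu]

protected theorem associatesMap (hf : IsDivisorClosedAt f b) :
    IsDivisorClosedAt (associatesMap f) (Associates.mk b) where
  injective := by
    rintro ⟨x⟩ ⟨y⟩ hxy
    exact Quotient.sound (hf.associated_of_map (Associates.mk_eq_mk_iff_associated.1 hxy))
  mem_range_of_dvd y hy := by
    obtain ⟨y, rfl⟩ := Associates.mk_surjective y
    obtain ⟨x, rfl⟩ := hf.mem_range_of_dvd y (Associates.mk_dvd_mk.1 hy)
    exact ⟨Associates.mk x, rfl⟩

theorem irreducible_map (hf : IsDivisorClosedAt f b) (ha : Irreducible a) (hab : a ∣ b) :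
    Irreducible (f a) := by
  have := hf.isLocalHom
  refine ⟨fun h => ha.not_isUnit (isUnit_of_map_unit f a h), fun x y hxy => ?_⟩
  have hdvd : x * y ∣ f b := hxy ▸ map_dvd f hab
  obtain ⟨x, rfl⟩ := hf.mem_range_of_dvd x (dvd_of_mul_right_dvd hdvd)
  obtain ⟨y, rfl⟩ := hf.mem_range_of_dvd y (dvd_of_mul_left_dvd hdvd)
  rw [← map_mul] at hxy
  exact (ha.isUnit_or_isUnit (hf.injective hxy)).imp (·.map f) (·.map f)

end IsDivisorClosedAt

end Associates

section Factorizations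

variable {M M' : Type*} [CancelCommMonoid M] [CancelCommMonoid M']
  {S : Submonoid M} {T : Submonoid M'} {f : S →* T} {b : S}

theorem IsDivisorClosedAt.mapsTo_zSet (hf : IsDivisorClosedAt f b) :
    Set.MapsTo (Multiset.map (associatesMap f)) (ZSet S b) (ZSet T (f b)) := by
  rintro z ⟨hirr, hprod⟩
  refine ⟨fun a ha => ?_, ?_⟩
  · obtain ⟨c, hc, rfl⟩ := Multiset.mem_map.1 ha
    exact hf.associatesMap.irreducible_map (hirr c hc) (hprod ▸ Multiset.dvd_prod hc)
  · rw [Multiset.prod_hom, hprod, associatesMap_mk]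

theorem IsDivisorClosedAt.infinite_zSet (hf : IsDivisorClosedAt f b)
    (hinf : (ZSet S b).Infinite) : (ZSet T (f b)).Infinite :=
  Set.infinite_of_injOn_mapsTo (Multiset.map_injective hf.associatesMap.injective).injOn
    hf.mapsTo_zSet hinf

theorem not_isFFM_of_infinite_zSet (hinf : (ZSet S b).Infinite) : ¬ IsFFM S :=
  fun hS => hinf (hS b).2

end Factorizations

section AdjoinMultiples

/-- The submonoid `N ∪ cM` of `M`, obtained from `N` by adjoining the principal ideal of `c`. -/
def adjoinMultiples {M : Type*} [CommMonoid M] (N : Submonoid M) (c : M) : Submonoid M where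
  carrier := {m | m ∈ N ∨ c ∣ m}
  one_mem' := Or.inl N.one_mem
  mul_mem' := by
    rintro p q (hp | hp) (hq | hq)
    · exact Or.inl (N.mul_mem hp hq)
    · exact Or.inr (hq.mul_left p)
    · exact Or.inr (hp.mul_right q)
    · exact Or.inr (hp.mul_right q)

theorem le_adjoinMultiples {M : Type*} [CommMonoid M] (N : Submonoid M) (c : M) :
    N ≤ adjoinMultiples N c :=
  fun _ => Or.inl

theorem isDivisorClosedAt_inclusion_adjoinMultiples {M : Type*} [CommMonoid M]
    {N : Submonoid M} {c : M} {b : N} (hcb : ¬ c ∣ (b : M)) :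
    IsDivisorClosedAt (Submonoid.inclusion (le_adjoinMultiples N c)) b where
  injective := Submonoid.inclusion_injective (le_adjoinMultiples N c)
  mem_range_of_dvd := by
    rintro ⟨m, hm | hcm⟩ hmb
    · exact ⟨⟨m, hm⟩, rfl⟩
    · exact absurd (hcm.trans (map_dvd (adjoinMultiples N c).subtype hmb)) hcb

theorem isUndermonoid_adjoinMultiples {M : Type*} [CancelCommMonoid M] (N : Submonoid M) (c : M) :
    IsUndermonoid (adjoinMultiples N c) :=
  fun m => ⟨c, Or.inr dvd_rfl, m * c, Or.inr (dvd_mul_left c m), rfl⟩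

end AdjoinMultiples

theorem isUnit_of_mul_dvd_self {M : Type*} [CancelCommMonoid M] {b x : M} (h : b * x ∣ b) :
    IsUnit x := by
  obtain ⟨c, hc⟩ := h
  exact IsUnit.of_mul_eq_one c (left_eq_mul.1 (hc.trans (mul_assoc b x c)))

theorem nonGroup_bad_undermonoid_general (M : Type*) [CancelCommMonoid M]
    (hng : ∃ x : M, ¬ IsUnit x) (N : Submonoid M) (b : M) (hb : b ∈ N)
    (hinf : (ZSet N ⟨b, hb⟩).Infinite) :
    ∃ W : Submonoid M, N ≤ W ∧ IsUndermonoid W ∧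
      ∃ hbW : b ∈ W, (ZSet W ⟨b, hbW⟩).Infinite ∧ ¬ IsFFM W := by
  obtain ⟨x, hx⟩ := hng
  have hle : N ≤ adjoinMultiples N (b * x) := le_adjoinMultiples N (b * x)
  have hclosed : IsDivisorClosedAt (Submonoid.inclusion hle) ⟨b, hb⟩ :=
    isDivisorClosedAt_inclusion_adjoinMultiples (mt isUnit_of_mul_dvd_self hx)
  have hinfW : (ZSet (adjoinMultiples N (b * x)) ⟨b, hle hb⟩).Infinite :=
    hclosed.infinite_zSet hinf
  exact ⟨adjoinMultiples N (b * x), hle, isUndermonoid_adjoinMultiples N (b * x), hle hb, hinfW,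
    not_isFFM_of_infinite_zSet hinfW⟩

/-- Bad submonoids produce bad undermonoids, non-group case: if `M` is not a group
and a submonoid `N` has an element `b` with infinitely many length-`ℓ`
factorizations, then `M` has an undermonoid `W ⊇ N` in which `b` has infinitely
many factorizations; in particular `W` is not an FFM. -/
theorem nonGroup_bad_undermonoid (M : Type*) [CancelCommMonoid M]
    (hng : ∃ x : M, ¬ IsUnit x) (N : Submonoid M) (b : M) (hb : b ∈ N) (ℓ : ℕ)
    (hinf : (ZSetLen N ⟨b, hb⟩ ℓ).Infinite) :
    ∃ W : Submonoid M, N ≤ W ∧ IsUndermonoid W ∧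
      ∃ hbW : b ∈ W, (ZSet W ⟨b, hbW⟩).Infinite ∧ ¬ IsFFM W :=
  nonGroup_bad_undermonoid_general M hng N b hb (hinf.mono fun _ hz => hz.1)
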